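/- arXiv:2405.20390 — 2 statements merged into one kernel-verified Lean document; each statement's English description precedes it below -/
import Mathlib

section
/- Let S ⊆ E be convex, let U : E → ℝ be L-smooth and μ-strongly convex on S (0 < μ ≤ L), let g* be a minimizer of U over S, and let (g_k, ξ_k) follow the Heavy-Ball iteration with γ = 2√μ and h = √μ/(4L), with g_k ∈ S for all k ≥ 0 (and g₀ − hξ₀ ∈ S). Then for all k ≥ 1, L^HB(g_{k+1}, ξ_{k+1}) ≤ (1 + μ/(16L))⁻¹ · L^HB(g_k, ξ_k). (Lemma C.3, Euclidean instance.) -/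
open RealInnerProductSpace

/-- `z` is a point of `S` with a ball of radius `ε` in the directions of `V` inside `S`. -/
def HBCore {E : Type*} [NormedAddCommGroup E] [InnerProductSpace ℝ E]
    (S : Set E) (V : Submodule ℝ E) (ε : ℝ) (z : E) : Prop :=
  ∀ v ∈ V, ‖v‖ ≤ ε → z + v ∈ S

section HB
variable {E : Type*} [NormedAddCommGroup E] [InnerProductSpace ℝ E]

theorem hb_core_add (S : Set E) (hS : Convex ℝ S) (V : Submodule ℝ E) [FiniteDimensional ℝ V]
    (ε : ℝ) (hε : 0 < ε) (z p : E) (hc : HBCore S V ε z) (hp : p ∈ S) :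
    ∃ (W : Submodule ℝ E) (_ : FiniteDimensional ℝ W) (ε' : ℝ) (z' : E),
      0 < ε' ∧ HBCore S W ε' z' ∧ V ≤ W ∧ p - z ∈ W ∧ z' - z ∈ W := by
  by_cases hpV : p - z ∈ V
  · exact ⟨V, inferInstance, ε, z, hε, hc, le_refl _, hpV, by simp⟩
  set q := V.starProjection (p - z) with hq
  set o := (p - z) - q with ho
  have hqV : q ∈ V := Submodule.starProjection_apply_mem V _
  have ho_orth : ∀ w ∈ V, ⟪w, o⟫ = 0 := by
    intro w hw
    have : o ∈ Vᗮ := Submodule.sub_starProjection_mem_orthogonal (p - z)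
    exact Submodule.inner_right_of_mem_orthogonal hw this
  have ho0 : o ≠ 0 := by
    intro h0
    apply hpV
    have : p - z = q := sub_eq_zero.mp h0
    rw [this]; exact hqV
  have hopos : 0 < ‖o‖ := norm_pos_iff.mpr ho0
  set K : ℝ := 1 + ‖q‖ / ‖o‖ with hK
  have hKpos : 0 < K := by positivity
  set ε' : ℝ := min (‖o‖ / 4) (ε / (4 * K)) with hε'
  have hε'pos : 0 < ε' := by positivity
  refine ⟨V ⊔ Submodule.span ℝ {p - z}, inferInstance, ε', z + (1 / 2 : ℝ) • (p - z), hε'pos, ?_,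
    le_sup_left, ?_, ?_⟩
  · intro w hw hwn
    obtain ⟨v, hv, u, hu, rfl⟩ := Submodule.mem_sup.mp hw
    obtain ⟨c, rfl⟩ := Submodule.mem_span_singleton.mp hu
    have hdec : v + c • (p - z) = (v + c • q) + c • o := by
      rw [ho]; module
    have hin : ⟪v + c • q, c • o⟫ = 0 := by
      rw [inner_smul_right, ho_orth _ (V.add_mem hv (V.smul_mem c hqV)), mul_zero]
    have hpyth : ‖v + c • (p - z)‖ ^ 2 = ‖v + c • q‖ ^ 2 + ‖c • o‖ ^ 2 := by
      rw [hdec, norm_add_sq_real, hin]; ring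
    have h1 : ‖c • o‖ ≤ ε' := by
      refine le_trans (abs_le_of_sq_le_sq' ?_ (norm_nonneg _)).2 hwn
      nlinarith [sq_nonneg ‖v + c • q‖]
    have h2 : ‖v + c • q‖ ≤ ε' := by
      refine le_trans (abs_le_of_sq_le_sq' ?_ (norm_nonneg _)).2 hwn
      nlinarith [sq_nonneg ‖c • o‖]
    rw [norm_smul, Real.norm_eq_abs] at h1
    have hc1 : |c| ≤ ε' / ‖o‖ := by rwa [le_div_iff₀ hopos]
    have hc2 : |c| ≤ 1 / 4 := by
      refine hc1.trans ?_
      rw [div_le_iff₀ hopos]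
      have := min_le_left (‖o‖ / 4) (ε / (4 * K))
      linarith
    have hv2 : ‖v‖ ≤ ε / 4 := by
      have e1 : ‖v‖ ≤ ‖v + c • q‖ + ‖c • q‖ := by
        have : v = (v + c • q) - c • q := by module
        calc ‖v‖ = ‖(v + c • q) - c • q‖ := by rw [← this]
          _ ≤ _ := norm_sub_le _ _
      rw [norm_smul, Real.norm_eq_abs] at e1
      have e2 : |c| * ‖q‖ ≤ ε' / ‖o‖ * ‖q‖ := mul_le_mul_of_nonneg_right hc1 (norm_nonneg _)
      have e3 : ε' + ε' / ‖o‖ * ‖q‖ = ε' * K := by rw [hK]; field_simp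
      have e4 : ε' * K ≤ ε / 4 := by
        have := min_le_right (‖o‖ / 4) (ε / (4 * K))
        calc ε' * K ≤ ε / (4 * K) * K := mul_le_mul_of_nonneg_right this hKpos.le
          _ = ε / 4 := by field_simp
      linarith
    have hca := abs_le.mp hc2
    have hd : 0 < 1 / 2 - c := by linarith
    have hmem : z + (1 / 2 - c)⁻¹ • v ∈ S := by
      apply hc _ (V.smul_mem _ hv)
      rw [norm_smul, norm_inv, Real.norm_eq_abs, abs_of_pos hd, inv_mul_le_iff₀ hd]
      nlinarith
    have := hS hmem hp hd.le (by linarith : (0:ℝ) ≤ 1 / 2 + c) (by ring)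
    convert this using 1
    rw [smul_add, smul_smul, mul_inv_cancel₀ hd.ne']
    module
  · exact Submodule.mem_sup_right (Submodule.mem_span_singleton_self _)
  · rw [add_sub_cancel_left]
    exact Submodule.smul_mem _ _ (Submodule.mem_sup_right (Submodule.mem_span_singleton_self _))

theorem hb_local (S : Set E) (V : Submodule ℝ E) [FiniteDimensional ℝ V]
    (U : E → ℝ) (G : E → E) (L : ℝ) (hL : 0 < L)
    (hlip : ∀ x y : E, ‖G x - G y‖ ≤ L * ‖x - y‖)
    (hconv : ∀ x ∈ S, ∀ y ∈ S, U x + ⟪G x, y - x⟫ ≤ U y)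
    (δ : ℝ) (x y : E) (hx : x ∈ S) (hy : y ∈ S) (hyc : HBCore S V δ y)
    (hxy : ‖y - x‖ ≤ δ) :
    U x + ⟪G x, y - x⟫ + ‖V.starProjection (G y - G x)‖ ^ 2 / (4 * L) ≤ U y := by
  set P := V.starProjection (G y - G x) with hP
  have hPV : P ∈ V := Submodule.starProjection_apply_mem V _
  have hPn : ‖P‖ ≤ ‖G y - G x‖ := Submodule.norm_starProjection_apply_le V _
  have hPi : ⟪G y - G x, P⟫ = ‖P‖ ^ 2 := by
    have : ⟪P, (G y - G x) - P⟫ = 0 :=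
      Submodule.inner_right_of_mem_orthogonal hPV
        (Submodule.sub_starProjection_mem_orthogonal (G y - G x))
    rw [inner_sub_right, real_inner_self_eq_norm_sq] at this
    rw [real_inner_comm]; linarith
  set s : ℝ := 1 / (2 * L) with hs
  have hspos : 0 < s := by positivity
  have hz : y + (-s) • P ∈ S := by
    apply hyc _ (V.smul_mem _ hPV)
    rw [norm_smul, norm_neg, Real.norm_eq_abs, abs_of_pos hspos]
    have h1 := hlip y x
    have : s * ‖P‖ ≤ s * (L * ‖y - x‖) := by gcongr; linarith
    have h2 : s * (L * ‖y - x‖) = ‖y - x‖ / 2 := by rw [hs]; field_simp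
    linarith [norm_nonneg (y - x)]
  set z := y + (-s) • P with hzdef
  have a1 := hconv x hx z hz
  have a2 := hconv z hz y hy
  have a3 : ⟪G x, z - x⟫ = ⟪G x, y - x⟫ - s * ⟪G x, P⟫ := by
    have : z - x = (y - x) + (-s) • P := by rw [hzdef]; module
    rw [this, inner_add_right, inner_smul_right]; ring
  have a4 : ⟪G z, y - z⟫ = s * ⟪G z, P⟫ := by
    have : y - z = s • P := by rw [hzdef]; module
    rw [this, inner_smul_right]
  have a5 : ⟪G y - G z, P⟫ ≤ L * s * ‖P‖ ^ 2 := by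
    refine (real_inner_le_norm _ _).trans ?_
    have := hlip y z
    have e : ‖y - z‖ = s * ‖P‖ := by
      have : y - z = s • P := by rw [hzdef]; module
      rw [this, norm_smul, Real.norm_eq_abs, abs_of_pos hspos]
    rw [e] at this
    nlinarith [norm_nonneg P]
  have a6 : L * s = 1 / 2 := by rw [hs]; field_simp
  rw [inner_sub_left] at a5 hPi
  have a7 : s * (⟪G z, P⟫ - ⟪G x, P⟫) ≥ s * (‖P‖ ^ 2 / 2) := by
    apply mul_le_mul_of_nonneg_left _ hspos.le
    rw [a6] at a5; linarith
  have a8 : s * (‖P‖ ^ 2 / 2) = ‖P‖ ^ 2 / (4 * L) := by rw [hs]; field_simp; try ring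
  linarith

theorem hb_core_mid (S : Set E) (hS : Convex ℝ S) (V : Submodule ℝ E) (δ : ℝ) (x y : E)
    (hx : HBCore S V δ x) (hy : HBCore S V δ y) : HBCore S V δ ((1 / 2 : ℝ) • (x + y)) := by
  intro v hv hn
  have := hS (hx v hv hn) (hy v hv hn) (by norm_num : (0:ℝ) ≤ 1 / 2)
    (by norm_num : (0:ℝ) ≤ 1 / 2) (by norm_num)
  convert this using 1
  module

theorem hb_coco_core (S : Set E) (hS : Convex ℝ S) (V : Submodule ℝ E) [FiniteDimensional ℝ V]
    (U : E → ℝ) (G : E → E) (L : ℝ) (hL : 0 < L)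
    (hlip : ∀ x y : E, ‖G x - G y‖ ≤ L * ‖x - y‖)
    (hconv : ∀ x ∈ S, ∀ y ∈ S, U x + ⟪G x, y - x⟫ ≤ U y)
    (δ : ℝ) (hδ : 0 < δ) (n : ℕ) : ∀ (x y : E), HBCore S V δ x → HBCore S V δ y →
    ‖y - x‖ ≤ 2 ^ n * δ →
    ‖V.starProjection (G y - G x)‖ ^ 2 ≤ 2 * L * ⟪G y - G x, y - x⟫ := by
  induction n with
  | zero =>
    intro x y hx hy hxy
    have hxS : x ∈ S := by simpa using hx 0 V.zero_mem (by simpa using hδ.le)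
    have hyS : y ∈ S := by simpa using hy 0 V.zero_mem (by simpa using hδ.le)
    have hxy' : ‖y - x‖ ≤ δ := by simpa using hxy
    have h1 := hb_local S V U G L hL hlip hconv δ x y hxS hyS hy hxy'
    have h2 := hb_local S V U G L hL hlip hconv δ y x hyS hxS hx (by rwa [norm_sub_rev])
    have e : ‖V.starProjection (G x - G y)‖ = ‖V.starProjection (G y - G x)‖ := by
      rw [← neg_sub, map_neg, norm_neg]
    rw [e] at h2
    have e2 : ⟪G y, x - y⟫ = - ⟪G y, y - x⟫ := by rw [← neg_sub, inner_neg_right]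
    rw [e2] at h2
    rw [inner_sub_left]
    have h3 : ‖V.starProjection (G y - G x)‖ ^ 2 / (4 * L) * 2 ≤ ⟪G y, y - x⟫ - ⟪G x, y - x⟫ := by
      linarith
    have h4 : ‖V.starProjection (G y - G x)‖ ^ 2
        = 2 * L * (‖V.starProjection (G y - G x)‖ ^ 2 / (4 * L) * 2) := by field_simp; try ring
    rw [h4]
    gcongr
  | succ n ih =>
    intro x y hx hy hxy
    have hm := hb_core_mid S hS V δ x y hx hy
    set m := (1 / 2 : ℝ) • (x + y) with hmdef
    have e1 : m - x = (1 / 2 : ℝ) • (y - x) := by rw [hmdef]; module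
    have e2 : y - m = (1 / 2 : ℝ) • (y - x) := by rw [hmdef]; module
    have hn : ‖(1 / 2 : ℝ) • (y - x)‖ ≤ 2 ^ n * δ := by
      rw [norm_smul, pow_succ] at *
      norm_num at *
      linarith
    have h1 := ih x m hx hm (by rw [e1]; exact hn)
    have h2 := ih m y hm hy (by rw [e2]; exact hn)
    rw [e1, inner_smul_right] at h1
    rw [e2, inner_smul_right] at h2
    have e3 : V.starProjection (G y - G x)
        = V.starProjection (G m - G x) + V.starProjection (G y - G m) := by
      rw [← map_add]; congr 1; abel
    have e4 : ⟪G y - G x, y - x⟫ = ⟪G m - G x, y - x⟫ + ⟪G y - G m, y - x⟫ := by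
      rw [← inner_add_left]; congr 1; abel
    have e5 := norm_add_le (V.starProjection (G m - G x)) (V.starProjection (G y - G m))
    rw [← e3] at e5
    rw [e4]
    nlinarith [sq_nonneg (‖V.starProjection (G m - G x)‖ - ‖V.starProjection (G y - G m)‖),
      norm_nonneg (V.starProjection (G y - G x))]

theorem hb_coco (S : Set E) (hS : Convex ℝ S) (V : Submodule ℝ E) [FiniteDimensional ℝ V]
    (U : E → ℝ) (G : E → E) (L : ℝ) (hL : 0 < L)
    (hlip : ∀ x y : E, ‖G x - G y‖ ≤ L * ‖x - y‖)
    (hconv : ∀ x ∈ S, ∀ y ∈ S, U x + ⟪G x, y - x⟫ ≤ U y)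
    (ε : ℝ) (hε : 0 < ε) (z : E) (hz : HBCore S V ε z) (x y : E) (hx : x ∈ S) (hy : y ∈ S) :
    ‖V.starProjection (G y - G x)‖ ^ 2 ≤ 2 * L * ⟪G y - G x, y - x⟫ := by
  have hcont : Continuous G := by
    refine (LipschitzWith.of_dist_le_mul (K := ⟨L, hL.le⟩) ?_).continuous
    intro x y
    rw [dist_eq_norm, dist_eq_norm]; exact hlip x y
  have hcore : ∀ p ∈ S, ∀ t : ℝ, 0 < t → t ≤ 1 → HBCore S V (t * ε) ((1 - t) • p + t • z) := by
    intro p hp t ht ht1 v hv hn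
    have h1 : z + t⁻¹ • v ∈ S := by
      apply hz _ (V.smul_mem _ hv)
      rw [norm_smul, norm_inv, Real.norm_eq_abs, abs_of_pos ht, inv_mul_le_iff₀ ht]
      exact hn
    have := hS hp h1 (by linarith : (0:ℝ) ≤ 1 - t) ht.le (by ring)
    convert this using 1
    rw [smul_add, smul_smul, mul_inv_cancel₀ ht.ne']
    module
  let F : ℝ → E → E := fun t p => (1 - t) • p + t • z
  have hF : ∀ p, Continuous (fun t => F t p) := by intro p; simp only [F]; fun_prop
  have hGF : ∀ p, Continuous (fun t => G (F t p)) := fun p => hcont.comp (hF p)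
  have hl : Continuous (fun t => ‖V.starProjection (G (F t y) - G (F t x))‖ ^ 2) :=
    ((V.starProjection.continuous.comp ((hGF y).sub (hGF x))).norm).pow 2
  have hr : Continuous (fun t => 2 * L * ⟪G (F t y) - G (F t x), F t y - F t x⟫) :=
    continuous_const.mul (((hGF y).sub (hGF x)).inner ((hF y).sub (hF x)))
  have hev : ∀ᶠ t in nhdsWithin (0:ℝ) (Set.Ioi 0),
      ‖V.starProjection (G (F t y) - G (F t x))‖ ^ 2
        ≤ 2 * L * ⟪G (F t y) - G (F t x), F t y - F t x⟫ := by
    filter_upwards [Ioo_mem_nhdsGT (zero_lt_one : (0:ℝ) < 1)] with t ht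
    have hd : 0 < t * ε := mul_pos ht.1 hε
    obtain ⟨n, hn⟩ := pow_unbounded_of_one_lt (‖F t y - F t x‖ / (t * ε)) (one_lt_two : (1:ℝ) < 2)
    refine hb_coco_core S hS V U G L hL hlip hconv (t * ε) hd n (F t x) (F t y)
      (hcore x hx t ht.1 ht.2.le) (hcore y hy t ht.1 ht.2.le) ?_
    rw [div_lt_iff₀ hd] at hn
    exact hn.le
  have h0 := le_of_tendsto_of_tendsto (hl.continuousAt.tendsto.mono_left nhdsWithin_le_nhds)
    (hr.continuousAt.tendsto.mono_left nhdsWithin_le_nhds) hev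
  simpa [F] using h0

theorem hb_scalar (a d y n q yv vr yr Lk : ℝ) (ha : 0 < a) (ha2 : a ≤ 1 / 2)
    (hy : 0 ≤ y) (hn : 0 ≤ n) (hq : 0 ≤ q)
    (hyv : ∀ s : ℝ, 0 ≤ y + 2 * s * yv + s ^ 2 * n)
    (hvr : ∀ s : ℝ, 0 ≤ n + 2 * s * vr + s ^ 2 * q)
    (h1 : a * d + a * (1 - a) * y / 2 ≤ 2 * (1 - a) * yr)
    (h2 : a * y ≤ 2 * yr) (h3 : q ≤ yr / 2)
    (hL : d - vr + a ^ 2 / 8 * n + n / 4 + (4 * y + n + 4 * yv) / 4 ≤ Lk) :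
    (1 + a / 8) * (d + (1 - a) ^ 2 / 4 * (n - 2 * vr + q)
      + (4 * y + n + q + 4 * yv - 4 * yr - 2 * vr) / 4) ≤ Lk := by
  refine le_trans ?_ hL
  have e1 : 0 ≤ a * (y / 10 - yv / 8 + n * (5 / 128)) := by
    have := hyv (-5 / 8)
    apply mul_nonneg ha.le; linarith
  set c : ℝ := 1 - (1 + a / 8) * ((1 - a) ^ 2 + 1) / 2 with hc
  have hc0 : 0 ≤ c := by rw [hc]; nlinarith [sq_nonneg a, mul_pos ha ha]
  have hc1 : c ≤ 7 / 8 * a := by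
    rw [hc]; nlinarith [sq_nonneg a, mul_pos ha ha, pow_pos ha 3]
  have e2 : 0 ≤ c * (3 / 8 * n - vr + 2 / 3 * q) := by
    have := hvr (-4 / 3)
    apply mul_nonneg hc0; linarith
  have e3 : 0 ≤ a * (-1 / 40 + (1 - a) / 16) * y := by
    apply mul_nonneg (mul_nonneg ha.le (by linarith)) hy
  have e4 : 0 ≤ (-((1 + a / 8) * ((1 - a) ^ 2 + 1) / 4 - a ^ 2 / 8 - 1 / 2 + 5 / 128 * a
      + 3 / 8 * c)) * n := by
    apply mul_nonneg _ hn
    have : (1 + a / 8) * ((1 - a) ^ 2 + 1) / 4 = (1 - c) / 2 := by rw [hc]; ring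
    rw [this]
    have : c / 8 ≥ 5 / 128 * a - a ^ 2 / 8 := by
      rw [hc]; nlinarith [sq_nonneg a, mul_pos ha ha, pow_pos ha 3]
    linarith
  have e5 : 0 ≤ (-((1 + a / 8) * ((1 - a) ^ 2 + 1) / 4 - (7 / 10 + 3 / 4 * a) + 2 / 3 * c)) * q := by
    apply mul_nonneg _ hq
    have : (1 + a / 8) * ((1 - a) ^ 2 + 1) / 4 = (1 - c) / 2 := by rw [hc]; ring
    rw [this]
    linarith
  have e6 : 0 ≤ (7 / 10 + 3 / 4 * a) * (yr / 2 - q) :=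
    mul_nonneg (by linarith) (by linarith)
  rw [hc] at e2 e4 e5
  nlinarith [e1, e2, e3, e4, e5, e6, h1, h2]

theorem hb_grad_zero (S : Set E)
    (U : E → ℝ) (G : E → E) (L μ : ℝ) (hμ : 0 < μ) (hμL : μ ≤ L)
    (hlip : ∀ x y : E, ‖G x - G y‖ ≤ L * ‖x - y‖)
    (hstrong : ∀ x ∈ S, ∀ y ∈ S, U x + ⟪G x, y - x⟫ + μ / 2 * ‖y - x‖ ^ 2 ≤ U y)
    (gstar : E) (hgs : gstar ∈ S) (hmin : ∀ x ∈ S, U gstar ≤ U x)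
    (a h : ℝ) (ha : 0 < a) (ha2 : a ≤ 1 / 2) (hh : 0 < h) (hLh : L * h ^ 2 = a / 8)
    (g ξ : ℕ → E)
    (hξ : ∀ k : ℕ, ξ (k + 1) = (1 - a) • ξ k - h • G (g k))
    (hg : ∀ k : ℕ, g (k + 1) = g k + h • ξ (k + 1))
    (hgS : ∀ k : ℕ, g k ∈ S) : G gstar = 0 := by
  have hL : 0 < L := hμ.trans_le hμL
  have hstep : ∀ k, 7 * a / 8 * ‖ξ (k + 1)‖ ^ 2 ≤
      (U (g k) + (1 - a) / 2 * ‖ξ k‖ ^ 2) - (U (g (k+1)) + (1 - a) / 2 * ‖ξ (k+1)‖ ^ 2) := by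
    intro k
    have b1 := hstrong _ (hgS (k+1)) _ (hgS k)
    have b2 : g k - g (k + 1) = (-h) • ξ (k + 1) := by rw [hg k]; module
    have b4 : ⟪G (g (k+1)) - G (g k), h • ξ (k+1)⟫ ≤ a / 8 * ‖ξ (k+1)‖ ^ 2 := by
      refine (real_inner_le_norm _ _).trans ?_
      have := hlip (g (k+1)) (g k)
      rw [norm_sub_rev (g (k+1)), b2, norm_smul, norm_neg, Real.norm_eq_abs, abs_of_pos hh] at this
      rw [norm_smul, Real.norm_eq_abs, abs_of_pos hh]
      calc ‖G (g (k+1)) - G (g k)‖ * (h * ‖ξ (k+1)‖)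
          ≤ (L * (h * ‖ξ (k+1)‖)) * (h * ‖ξ (k+1)‖) := by gcongr
        _ = (L * h ^ 2) * ‖ξ (k+1)‖ ^ 2 := by ring
        _ = _ := by rw [hLh]
    have b5 : h • G (g k) = (1 - a) • ξ k - ξ (k+1) := by rw [hξ k]; module
    have b6 : h * ⟪G (g k), ξ (k+1)⟫ = (1 - a) * ⟪ξ k, ξ (k+1)⟫ - ‖ξ (k+1)‖ ^ 2 := by
      rw [← real_inner_smul_left, b5, inner_sub_left, real_inner_smul_left,
        real_inner_self_eq_norm_sq]
    rw [b2, inner_smul_right] at b1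
    rw [inner_smul_right, inner_sub_left] at b4
    have b7 : 0 ≤ μ / 2 * ‖(-h) • ξ (k + 1)‖ ^ 2 := by positivity
    have b8 : ⟪ξ k, ξ (k+1)⟫ ≤ (‖ξ k‖ ^ 2 + ‖ξ (k+1)‖ ^ 2) / 2 := by
      nlinarith [real_inner_le_norm (ξ k) (ξ (k+1)), sq_nonneg (‖ξ k‖ - ‖ξ (k+1)‖)]
    have b9 := mul_le_mul_of_nonneg_left b8 (by linarith : (0:ℝ) ≤ 1 - a)
    nlinarith
  have hsum : Summable (fun k => 7 * a / 8 * ‖ξ (k + 1)‖ ^ 2) := by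
    apply summable_of_sum_range_le (c := (U (g 0) + (1 - a) / 2 * ‖ξ 0‖ ^ 2) - U gstar)
    · intro k; positivity
    · intro n
      have h1 : ∑ k ∈ Finset.range n, 7 * a / 8 * ‖ξ (k + 1)‖ ^ 2 ≤
          (U (g 0) + (1 - a) / 2 * ‖ξ 0‖ ^ 2) - (U (g n) + (1 - a) / 2 * ‖ξ n‖ ^ 2) := by
        rw [← Finset.sum_range_sub' (fun k => U (g k) + (1 - a) / 2 * ‖ξ k‖ ^ 2)]
        exact Finset.sum_le_sum (fun k _ => hstep k)
      have h2 := hmin _ (hgS n)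
      have h3 : 0 ≤ (1 - a) / 2 * ‖ξ n‖ ^ 2 :=
        mul_nonneg (by linarith) (sq_nonneg _)
      linarith
  have ht1 : Filter.Tendsto (fun k => ξ (k+1)) Filter.atTop (nhds 0) := by
    have t := hsum.tendsto_atTop_zero
    have t2 := (t.const_mul (8 / (7 * a))).sqrt
    rw [tendsto_zero_iff_norm_tendsto_zero]
    rw [mul_zero, Real.sqrt_zero] at t2
    refine t2.congr (fun k => ?_)
    have : 8 / (7 * a) * (7 * a / 8 * ‖ξ (k + 1)‖ ^ 2) = ‖ξ (k+1)‖ ^ 2 := by field_simp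
    rw [this, Real.sqrt_sq (norm_nonneg _)]
  have ht0 : Filter.Tendsto ξ Filter.atTop (nhds 0) := (Filter.tendsto_add_atTop_iff_nat 1).mp ht1
  have hG0 : Filter.Tendsto (fun k => G (g k)) Filter.atTop (nhds 0) := by
    have t := ((ht0.const_smul (1 - a)).sub ht1).const_smul h⁻¹
    simp only [smul_zero, sub_zero] at t
    refine t.congr (fun k => ?_)
    rw [hξ k, sub_sub_cancel, smul_smul, inv_mul_cancel₀ hh.ne', one_smul]
  have hx0 : Filter.Tendsto (fun k => ‖g k - gstar‖) Filter.atTop (nhds 0) := by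
    have t := hG0.norm.const_mul (2 / μ)
    rw [norm_zero, mul_zero] at t
    refine squeeze_zero (fun _ => norm_nonneg _) (fun k => ?_) t
    have c1 := hstrong _ (hgS k) _ hgs
    have c2 := hmin _ (hgS k)
    have c3 := (abs_le.mp (abs_real_inner_le_norm (G (g k)) (gstar - g k))).1
    rw [norm_sub_rev]
    have c4 : μ / 2 * ‖gstar - g k‖ ^ 2 ≤ ‖G (g k)‖ * ‖gstar - g k‖ := by linarith
    rcases (norm_nonneg (gstar - g k)).eq_or_lt with h0 | h0
    · rw [← h0]; positivity
    · have c5 : μ / 2 * ‖gstar - g k‖ ≤ ‖G (g k)‖ := by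
        refine le_of_mul_le_mul_right ?_ h0
        linarith
      calc ‖gstar - g k‖ = 2 / μ * (μ / 2 * ‖gstar - g k‖) := by field_simp
        _ ≤ _ := by gcongr
  have hG1 : Filter.Tendsto (fun k => G (g k)) Filter.atTop (nhds (G gstar)) := by
    rw [tendsto_iff_norm_sub_tendsto_zero]
    have t := hx0.const_mul L
    rw [mul_zero] at t
    exact squeeze_zero (fun _ => norm_nonneg _) (fun k => hlip _ _) t
  exact tendsto_nhds_unique hG1 hG0

end HB

/-- Lemma C.3 (contraction of the Heavy-Ball Lyapunov function with `γ = 2√μ`,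
`h = √μ/(4L)`), Euclidean instance. -/
theorem heavy_ball_lyapunov_contraction
    {E : Type*} [NormedAddCommGroup E] [InnerProductSpace ℝ E] [CompleteSpace E]
    (S : Set E) (hS : Convex ℝ S)
    (U : E → ℝ) (L μ : ℝ) (hμ : 0 < μ) (hμL : μ ≤ L)
    (hsmooth : ∀ x y : E, ‖gradient U x - gradient U y‖ ≤ L * ‖x - y‖)
    (hstrong : ∀ x ∈ S, ∀ y ∈ S,
      U x + ⟪gradient U x, y - x⟫ + μ / 2 * ‖y - x‖ ^ 2 ≤ U y)
    (gstar : E) (hgstarS : gstar ∈ S) (hmin : ∀ x ∈ S, U gstar ≤ U x)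
    (γ h : ℝ) (hγ : γ = 2 * Real.sqrt μ) (hh : h = Real.sqrt μ / (4 * L))
    (g ξ : ℕ → E)
    (hξ : ∀ k : ℕ, ξ (k + 1) = (1 - γ * h) • ξ k - h • gradient U (g k))
    (hg : ∀ k : ℕ, g (k + 1) = g k + h • ξ (k + 1))
    (hgS : ∀ k : ℕ, g k ∈ S) (hg0S : g 0 - h • ξ 0 ∈ S)
    (LHB : E → E → ℝ)
    (hLHB : ∀ x v : E, LHB x v =
      (1 / (1 - γ * h)) * (U (x - h • v) - U gstar) + (1 / 4 : ℝ) * ‖v‖ ^ 2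
        + (1 / 4 : ℝ) * ‖(γ / (1 - γ * h)) • (x - gstar) + v‖ ^ 2) :
    ∀ k : ℕ, 1 ≤ k →
      LHB (g (k + 1)) (ξ (k + 1)) ≤ (1 + μ / (16 * L))⁻¹ * LHB (g k) (ξ k) := by

  intro k hk
  obtain ⟨j, rfl⟩ : ∃ j, k = j + 1 := ⟨k - 1, by omega⟩
  have hL : 0 < L := hμ.trans_le hμL
  set G : E → E := gradient U with hG
  set m := Real.sqrt μ with hm
  have hmpos : 0 < m := Real.sqrt_pos.mpr hμ
  have hmsq : m ^ 2 = μ := Real.sq_sqrt hμ.le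
  have hhpos : 0 < h := by rw [hh]; positivity
  obtain ⟨a, hadef⟩ : ∃ a, a = γ * h := ⟨_, rfl⟩
  have haval : a = μ / (2 * L) := by
    rw [hadef, hγ, hh, ← hmsq]; field_simp; try norm_num
  have ha : 0 < a := by rw [haval]; positivity
  have ha2 : a ≤ 1 / 2 := by
    rw [haval, div_le_iff₀ (by positivity)]; linarith
  have hLh : L * h ^ 2 = a / 8 := by
    rw [haval, hh, div_pow, hmsq]; field_simp; try norm_num
  have hr : μ / (16 * L) = a / 8 := by rw [haval]; field_simp; try norm_num
  have hmh : h * m = a / 2 := by rw [hadef, hγ]; ring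
  rw [← hadef] at hLHB
  simp only [← hadef] at hξ
  have hb : 0 < 1 - a := by linarith
  have hconv : ∀ x ∈ S, ∀ y ∈ S, U x + ⟪G x, y - x⟫ ≤ U y := by
    intro x hx y hy
    have := hstrong x hx y hy
    have h0 : 0 ≤ μ / 2 * ‖y - x‖ ^ 2 := by positivity
    linarith
  have hGs : G gstar = 0 := hb_grad_zero S U G L μ hμ hμL hsmooth hstrong gstar hgstarS hmin a h
    ha ha2 hhpos hLh g ξ hξ hg hgS
  -- cocoercivity
  have hcoco : ‖G (g (j+1))‖ ^ 2 ≤ 2 * L * ⟪G (g (j+1)), g (j+1) - gstar⟫ := by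
    have hc0 : HBCore S (⊥ : Submodule ℝ E) 1 gstar := by
      intro v hv _
      rw [(Submodule.mem_bot ℝ).mp hv, add_zero]; exact hgstarS
    obtain ⟨V1, _, ε1, z1, hε1, hz1, _, hp1, hd1⟩ :=
      hb_core_add S hS ⊥ 1 one_pos gstar (g j) hc0 (hgS j)
    obtain ⟨V2, _, ε2, z2, hε2, hz2, hle2, hp2, hd2⟩ :=
      hb_core_add S hS V1 ε1 hε1 z1 (g (j+1)) hz1 (hgS (j+1))
    obtain ⟨V3, _, ε3, z3, hε3, hz3, hle3, hp3, hd3⟩ :=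
      hb_core_add S hS V2 ε2 hε2 z2 (g (j+1+1)) hz2 (hgS (j+1+1))
    have m0 : g j - gstar ∈ V3 := hle3 (hle2 hp1)
    have mz1 : z1 - gstar ∈ V3 := hle3 (hle2 hd1)
    have m1 : g (j+1) - gstar ∈ V3 := by
      have := V3.add_mem (hle3 hp2) mz1
      simpa using this
    have mz2 : z2 - gstar ∈ V3 := by
      have := V3.add_mem (hle3 hd2) mz1
      simpa using this
    have m2 : g (j+1+1) - gstar ∈ V3 := by
      have := V3.add_mem hp3 mz2
      simpa using this
    have x1 : ξ (j+1) ∈ V3 := by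
      have := V3.smul_mem h⁻¹ (V3.sub_mem m1 m0)
      rw [hg j] at this
      convert this using 1
      rw [sub_sub_sub_cancel_right, add_sub_cancel_left, smul_smul, inv_mul_cancel₀ hhpos.ne',
        one_smul]
    have x2 : ξ (j+1+1) ∈ V3 := by
      have := V3.smul_mem h⁻¹ (V3.sub_mem m2 m1)
      rw [hg (j+1)] at this
      convert this using 1
      rw [sub_sub_sub_cancel_right, add_sub_cancel_left, smul_smul, inv_mul_cancel₀ hhpos.ne',
        one_smul]
    have hGV : G (g (j+1)) ∈ V3 := by
      have := V3.smul_mem h⁻¹ (V3.sub_mem (V3.smul_mem (1 - a) x1) x2)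
      convert this using 1
      rw [hξ (j+1), sub_sub_cancel, smul_smul, inv_mul_cancel₀ hhpos.ne', one_smul]
    have key := hb_coco S hS V3 U G L hL hsmooth hconv ε3 hε3 z3 hz3 gstar (g (j+1)) hgstarS
      (hgS (j+1))
    rw [hGs, sub_zero, Submodule.starProjection_eq_self_iff.mpr hGV] at key
    exact key
  -- the main computation
  have hs1 := hstrong _ (hgS (j+1)) _ hgstarS
  have hs2 := hstrong _ hgstarS _ (hgS (j+1))
  have hs3 := hstrong _ (hgS (j+1)) _ (hgS j)
  change _ + ⟪G gstar, _⟫ + _ ≤ _ at hs2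
  rw [hGs, inner_zero_left, add_zero] at hs2
  obtain ⟨x, hx⟩ : ∃ x, x = g (j+1) - gstar := ⟨_, rfl⟩
  obtain ⟨v, hv⟩ : ∃ v, v = ξ (j+1) := ⟨_, rfl⟩
  obtain ⟨q, hq⟩ : ∃ q, q = G (g (j+1)) := ⟨_, rfl⟩
  have hgj : g (j+1) - h • v = g j := by rw [hg j, hv]; abel
  have hgj1 : g (j+1+1) - h • ξ (j+1+1) = g (j+1) := by rw [hg (j+1)]; abel
  rw [hLHB, hLHB, hgj1, ← hv, hgj, hr, ← hx, inv_mul_eq_div, le_div_iff₀ (by positivity), mul_comm]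
  set Y : E := (m / (1 - a)) • x with hY
  set R : E := (h / (1 - a)) • q with hR
  have hxi : ξ (j+1+1) = (1 - a) • (v - R) := by
    rw [hξ (j+1), ← hv, ← hq, hR, smul_sub, smul_smul, mul_div_cancel₀ _ hb.ne']
  have hw : (γ / (1 - a)) • x + v = (2:ℝ) • Y + v := by
    rw [hY, smul_smul, hγ]; congr 2; ring
  have hw2 : (γ / (1 - a)) • (g (j+1+1) - gstar) + ξ (j+1+1) = ((2:ℝ) • Y + v) - R := by
    have e : g (j+1+1) - gstar = x + h • ξ (j+1+1) := by rw [hg (j+1), hx]; abel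
    have e2 : (γ / (1 - a)) * h * (1 - a) = a := by rw [hadef]; rw [hadef] at hb; field_simp
    rw [e, smul_add, hxi, smul_smul, smul_smul, e2]
    calc (γ / (1 - a)) • x + a • (v - R) + (1 - a) • (v - R) = ((γ / (1 - a)) • x + v) - R := by
          module
      _ = _ := by rw [hw]
  rw [hw2, hw, hxi]
  have n1 : ‖(1 - a) • (v - R)‖ ^ 2 = (1 - a) ^ 2 * (‖v‖ ^ 2 - 2 * ⟪v, R⟫ + ‖R‖ ^ 2) := by
    rw [norm_smul, mul_pow, Real.norm_eq_abs, sq_abs, norm_sub_sq_real]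
  have n2 : ‖(2:ℝ) • Y + v‖ ^ 2 = 4 * ‖Y‖ ^ 2 + ‖v‖ ^ 2 + 4 * ⟪Y, v⟫ := by
    rw [norm_add_sq_real, norm_smul, real_inner_smul_left, Real.norm_eq_abs]; norm_num; ring
  have n3 : ‖(2:ℝ) • Y + v - R‖ ^ 2
      = 4 * ‖Y‖ ^ 2 + ‖v‖ ^ 2 + ‖R‖ ^ 2 + 4 * ⟪Y, v⟫ - 4 * ⟪Y, R⟫ - 2 * ⟪v, R⟫ := by
    rw [norm_sub_sq_real, n2, inner_add_left, real_inner_smul_left Y R]; ring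
  rw [n1, n2, n3]
  have hY2 : ‖Y‖ ^ 2 = μ * ‖x‖ ^ 2 / (1 - a) ^ 2 := by
    rw [hY, norm_smul, mul_pow, Real.norm_eq_abs, sq_abs, div_pow, hmsq]; ring
  have hR2 : ‖R‖ ^ 2 = h ^ 2 * ‖q‖ ^ 2 / (1 - a) ^ 2 := by
    rw [hR, norm_smul, mul_pow, Real.norm_eq_abs, sq_abs, div_pow]; ring
  have hYR : ⟪Y, R⟫ = a / 2 * ⟪q, x⟫ / (1 - a) ^ 2 := by
    rw [hY, hR, real_inner_smul_left, real_inner_smul_right, real_inner_comm, ← hmh]; field_simp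
  have hvR : ⟪v, R⟫ = h * ⟪q, v⟫ / (1 - a) := by
    rw [hR, real_inner_smul_right, real_inner_comm]; ring
  -- simplify the hypotheses
  have s1 : (U (g (j+1)) - U gstar) + μ / 2 * ‖x‖ ^ 2 ≤ ⟪q, x⟫ := by
    have e : gstar - g (j+1) = -x := by rw [hx]; abel
    rw [e, norm_neg, inner_neg_right] at hs1
    rw [hq]; linarith
  have s2 : μ / 2 * ‖x‖ ^ 2 ≤ U (g (j+1)) - U gstar := by
    rw [← hx] at hs2; linarith
  have s3 : U (g (j+1)) - h * ⟪q, v⟫ + a ^ 2 / 8 * ‖v‖ ^ 2 ≤ U (g j) := by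
    have e : g j - g (j+1) = (-h) • v := by rw [← hgj]; module
    rw [e, inner_smul_right, norm_smul, norm_neg, mul_pow, Real.norm_eq_abs, sq_abs] at hs3
    have e2 : a ^ 2 / 8 = μ / 2 * h ^ 2 := by
      rw [← hmsq]; have : a = 2 * (h * m) := by linarith
      rw [this]; ring
    rw [e2, hq]
    change _ + -h * ⟪G (g (j+1)), v⟫ + _ ≤ _ at hs3
    linarith
  have s4 : h ^ 2 * ‖q‖ ^ 2 ≤ a / 4 * ⟪q, x⟫ := by
    rw [hq, hx]
    calc _ ≤ h ^ 2 * (2 * L * ⟪G (g (j+1)), g (j+1) - gstar⟫) := by gcongr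
      _ = 2 * (L * h ^ 2) * ⟪G (g (j+1)), g (j+1) - gstar⟫ := by ring
      _ = _ := by rw [hLh]; ring
  have hquad : ∀ A B : E, ∀ s : ℝ, 0 ≤ ‖A‖ ^ 2 + 2 * s * ⟪A, B⟫ + s ^ 2 * ‖B‖ ^ 2 := by
    intro A B s
    have := sq_nonneg ‖A + s • B‖
    rw [norm_add_sq_real, inner_smul_right, norm_smul, mul_pow, Real.norm_eq_abs, sq_abs] at this
    linarith
  have hb2 : 0 < (1 - a) ^ 2 := by positivity
  have main := hb_scalar a ((U (g (j+1)) - U gstar) / (1 - a)) (‖Y‖ ^ 2) (‖v‖ ^ 2) (‖R‖ ^ 2)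
    ⟪Y, v⟫ ⟪v, R⟫ ⟪Y, R⟫
    (1 / (1 - a) * (U (g j) - U gstar) + 1 / 4 * ‖v‖ ^ 2
      + 1 / 4 * (4 * ‖Y‖ ^ 2 + ‖v‖ ^ 2 + 4 * ⟪Y, v⟫))
    ha ha2 (sq_nonneg _) (sq_nonneg _) (sq_nonneg _) (hquad Y v) (hquad v R)
    (by
      rw [hY2, hYR]
      have e1 : a * ((U (g (j+1)) - U gstar) / (1 - a))
          + a * (1 - a) * (μ * ‖x‖ ^ 2 / (1 - a) ^ 2) / 2
          = a / (1 - a) * ((U (g (j+1)) - U gstar) + μ / 2 * ‖x‖ ^ 2) := by field_simp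
      have e2 : 2 * (1 - a) * (a / 2 * ⟪q, x⟫ / (1 - a) ^ 2) = a / (1 - a) * ⟪q, x⟫ := by field_simp
      rw [e1, e2]
      gcongr)
    (by
      rw [hY2, hYR]
      have e1 : a * (μ * ‖x‖ ^ 2 / (1 - a) ^ 2) = a / (1 - a) ^ 2 * (μ * ‖x‖ ^ 2) := by ring
      have e2 : 2 * (a / 2 * ⟪q, x⟫ / (1 - a) ^ 2) = a / (1 - a) ^ 2 * ⟪q, x⟫ := by ring
      rw [e1, e2]
      gcongr
      linarith)
    (by
      rw [hR2, hYR]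
      have e2 : a / 2 * ⟪q, x⟫ / (1 - a) ^ 2 / 2 = (a / 4 * ⟪q, x⟫) / (1 - a) ^ 2 := by ring
      rw [e2]
      gcongr)
    (by
      rw [hvR]
      have e1 : (U (g (j+1)) - U gstar) / (1 - a) - h * ⟪q, v⟫ / (1 - a) + a ^ 2 / 8 * ‖v‖ ^ 2
          ≤ 1 / (1 - a) * (U (g j) - U gstar) := by
        have f1 : a ^ 2 / 8 * ‖v‖ ^ 2 ≤ 1 / (1 - a) * (a ^ 2 / 8 * ‖v‖ ^ 2) := by
          apply le_mul_of_one_le_left (by positivity)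
          rw [le_div_iff₀ hb]; linarith
        have f2 : 1 / (1 - a) * (U (g (j+1)) - U gstar - h * ⟪q, v⟫ + a ^ 2 / 8 * ‖v‖ ^ 2)
            ≤ 1 / (1 - a) * (U (g j) - U gstar) := by
          apply mul_le_mul_of_nonneg_left _ (by positivity)
          linarith
        have f3 : 1 / (1 - a) * (U (g (j+1)) - U gstar - h * ⟪q, v⟫ + a ^ 2 / 8 * ‖v‖ ^ 2)
          = (U (g (j+1)) - U gstar) / (1 - a) - h * ⟪q, v⟫ / (1 - a)
            + 1 / (1 - a) * (a ^ 2 / 8 * ‖v‖ ^ 2) := by ring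
        linarith
      linarith)
  refine le_trans (le_of_eq ?_) main
  ring
end

section
/- Let S ⊆ E be convex, let U : E → ℝ be L-smooth and μ-strongly convex on S (0 < μ ≤ L), let g* be a minimizer of U over S with ∇U(g*) = 0, set γ = 2√μ and h = min{1/√(2L), 1/2}, and let (g_k, ξ_k) follow the NAG-SC iteration with g_k ∈ S for all k ≥ 0 (and g₀ − hξ₀ ∈ S). Then for all k ≥ 1, L^NAG(g_{k+1}, ξ_{k+1}) − L^NAG(g_k, ξ_k) ≤ −b·L^NAG(g_{k+1}, ξ_{k+1}), where b := (√μ/30)·min{1/√(2L), 1/2}. (Lemma D.1, Euclidean instance, in which the curvature term p(a) equals 1.) -/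
open RealInnerProductSpace

namespace NagAux

variable {E : Type*} [NormedAddCommGroup E] [InnerProductSpace ℝ E]

/-- Any vector of the direction space of a convex set is an inner direction at some point. -/
theorem exists_inner_dir {S : Set E} (hS : Convex ℝ S) {a0 : E} (ha0 : a0 ∈ S) {v : E}
    (hv : v ∈ vectorSpan ℝ S) :
    ∃ o : E, ∃ ε : ℝ, 0 < ε ∧ ∀ s : ℝ, |s| ≤ ε → o + s • v ∈ S := by
  unfold vectorSpan at hv
  induction hv using Submodule.span_induction with
  | mem x hx =>
    obtain ⟨a, ha, b, hb, rfl⟩ := Set.mem_vsub.1 hx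
    refine ⟨(1/2 : ℝ) • a + (1/2 : ℝ) • b, 1/2, by norm_num, fun s hs => ?_⟩
    obtain ⟨h1, h2⟩ := abs_le.1 hs
    have := hS ha hb (a := 1/2 + s) (b := 1/2 - s) (by linarith) (by linarith) (by ring)
    convert this using 1
    simp only [vsub_eq_sub]
    module
  | zero => exact ⟨a0, 1, one_pos, fun s _ => by simpa using ha0⟩
  | add x y _ _ hx hy =>
    obtain ⟨o1, e1, he1, h1⟩ := hx
    obtain ⟨o2, e2, he2, h2⟩ := hy
    refine ⟨(1/2 : ℝ) • o1 + (1/2 : ℝ) • o2, min e1 e2 / 2, by positivity, fun s hs => ?_⟩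
    have hs' : |2 * s| ≤ min e1 e2 := by
      rw [abs_mul, abs_of_pos (by norm_num : (0:ℝ) < 2)]; linarith
    have := hS (h1 (2*s) (hs'.trans (min_le_left _ _))) (h2 (2*s) (hs'.trans (min_le_right _ _)))
      (a := 1/2) (b := 1/2) (by norm_num) (by norm_num) (by norm_num)
    convert this using 1
    module
  | smul c x _ hx =>
    obtain ⟨o, e, he, h1⟩ := hx
    refine ⟨o, e / (|c| + 1), by positivity, fun s hs => ?_⟩
    rw [smul_smul]
    apply h1
    rw [abs_mul]
    have hc : 0 < |c| + 1 := by positivity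
    rw [le_div_iff₀ hc] at hs
    nlinarith [abs_nonneg s, abs_nonneg c]

section
variable {S : Set E} {U : E → ℝ} {G : E → E} {L : ℝ}

/-- Descent lemma inside a convex set. -/
theorem descent (hS : Convex ℝ S) (hL : 0 ≤ L)
    (hlip : ∀ x y : E, ‖G x - G y‖ ≤ L * ‖x - y‖)
    (hconv : ∀ x ∈ S, ∀ y ∈ S, U x + ⟪G x, y - x⟫ ≤ U y)
    {x y : E} (hx : x ∈ S) (hy : y ∈ S) :
    U y ≤ U x + ⟪G x, y - x⟫ + L / 2 * ‖y - x‖ ^ 2 := by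
  set d := y - x with hd
  have key : ∀ N : ℕ, 0 < N → ∀ i : ℕ, i ≤ N →
      U (x + ((i : ℝ) / N) • d) ≤ U x + ((i : ℝ) / N) * ⟪G x, d⟫
        + L * (i * (i + 1)) / (2 * N ^ 2) * ‖d‖ ^ 2 := by
    intro N hN i
    have hN' : (0:ℝ) < N := by exact_mod_cast hN
    have mem : ∀ i : ℕ, i ≤ N → x + ((i : ℝ) / N) • d ∈ S := by
      intro i hi
      have hi' : (i:ℝ) ≤ N := by exact_mod_cast hi
      apply hS.add_smul_sub_mem hx hy
      exact ⟨by positivity, by rw [div_le_one hN']; exact hi'⟩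
    induction i with
    | zero => intro _; simp
    | succ i ih =>
      intro hi
      have h1 := ih (by omega)
      have h2 := hconv _ (mem (i+1) hi) _ (mem i (by omega))
      set p := x + (((i+1:ℕ) : ℝ) / N) • d with hp
      have e1 : x + ((i : ℝ) / N) • d - p = (-(1 / (N:ℝ))) • d := by
        rw [hp]; push_cast; rw [add_div]; module
      rw [e1, inner_smul_right] at h2
      have h3 : ⟪G p - G x, d⟫ ≤ L * (((i:ℝ)+1) / N) * ‖d‖ ^ 2 := by
        have h4 := hlip p x
        have e2 : p - x = (((i:ℝ)+1) / N) • d := by rw [hp]; push_cast; module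
        rw [e2, norm_smul, Real.norm_of_nonneg (by positivity)] at h4
        calc ⟪G p - G x, d⟫ ≤ ‖G p - G x‖ * ‖d‖ := real_inner_le_norm _ _
          _ ≤ (L * ((((i:ℝ)+1) / N) * ‖d‖)) * ‖d‖ := by gcongr
          _ = _ := by ring
      rw [inner_sub_left] at h3
      have h5 : 1 / (N:ℝ) * ⟪G p, d⟫ ≤ 1 / (N:ℝ) * (⟪G x, d⟫ + L * (((i:ℝ)+1) / N) * ‖d‖ ^ 2) := by
        gcongr; linarith
      have e3 : U x + (((i+1:ℕ) : ℝ) / N) * ⟪G x, d⟫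
        + L * (((i+1:ℕ):ℝ) * (((i+1:ℕ):ℝ) + 1)) / (2 * N ^ 2) * ‖d‖ ^ 2
        = (U x + ((i : ℝ) / N) * ⟪G x, d⟫ + L * (i * (i + 1)) / (2 * N ^ 2) * ‖d‖ ^ 2)
          + 1 / (N:ℝ) * (⟪G x, d⟫ + L * (((i:ℝ)+1) / N) * ‖d‖ ^ 2) := by
        push_cast; field_simp; ring
      rw [e3]
      linarith
  have lim : Filter.Tendsto (fun n : ℕ => U x + ⟪G x, d⟫ + L / 2 * ‖d‖ ^ 2
      + L / 2 * ‖d‖ ^ 2 * (1 / ((n:ℝ) + 1))) Filter.atTop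
      (nhds (U x + ⟪G x, d⟫ + L / 2 * ‖d‖ ^ 2 + L / 2 * ‖d‖ ^ 2 * 0)) :=
    (tendsto_one_div_add_atTop_nhds_zero_nat.const_mul _).const_add _
  rw [mul_zero, add_zero] at lim
  refine ge_of_tendsto' lim fun n => ?_
  have := key (n+1) (by omega) (n+1) le_rfl
  have hn : ((n:ℝ)+1) ≠ 0 := by positivity
  push_cast at this
  rw [div_self hn, one_smul, hd, add_sub_cancel, ← hd] at this
  refine this.trans (le_of_eq ?_)
  field_simp
  ring

/-- Local cocoercivity in the direction `v`. -/
theorem coco_local (hS : Convex ℝ S) (hL : 0 < L)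
    (hlip : ∀ x y : E, ‖G x - G y‖ ≤ L * ‖x - y‖)
    (hconv : ∀ x ∈ S, ∀ y ∈ S, U x + ⟪G x, y - x⟫ ≤ U y)
    {x y v : E} (hv : v ≠ 0) {η : ℝ}
    (hx : ∀ s : ℝ, |s| ≤ η → x + s • v ∈ S) (hy : ∀ s : ℝ, |s| ≤ η → y + s • v ∈ S)
    (hxy : ‖y - x‖ ≤ η * ‖v‖) :
    ⟪G y - G x, v⟫ ^ 2 ≤ L * ‖v‖ ^ 2 * ⟪G y - G x, y - x⟫ := by
  have hv0 : 0 < ‖v‖ := norm_pos_iff.2 hv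
  have hη : 0 ≤ η := by
    by_contra hneg
    push Not at hneg
    nlinarith [norm_nonneg (y - x)]
  set s := ⟪G y - G x, v⟫ / (L * ‖v‖ ^ 2) with hs
  have hinn : |⟪G y - G x, v⟫| ≤ L * ‖y - x‖ * ‖v‖ :=
    (abs_real_inner_le_norm _ _).trans (by gcongr; exact hlip y x)
  have hsη : |s| ≤ η := by
    rw [hs, abs_div, abs_of_pos (show 0 < L * ‖v‖ ^ 2 by positivity), div_le_iff₀ (by positivity)]
    calc _ ≤ L * ‖y - x‖ * ‖v‖ := hinn
      _ ≤ L * (η * ‖v‖) * ‖v‖ := by gcongr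
      _ = _ := by ring
  have hsv : s * (L * ‖v‖ ^ 2) = ⟪G y - G x, v⟫ := by
    rw [hs]; field_simp
  have hx0 : x ∈ S := by simpa using hx 0 (by simpa using hη)
  have hy0 : y ∈ S := by simpa using hy 0 (by simpa using hη)
  have y1 := hy (-s) (by rwa [abs_neg])
  have x1 := hx s hsη
  have a1 := descent hS hL.le hlip hconv hy0 y1
  have a2 := descent hS hL.le hlip hconv hx0 x1
  have b1 := hconv _ hx0 _ y1
  have b2 := hconv _ hy0 _ x1
  rw [add_sub_cancel_left, norm_smul, mul_pow, Real.norm_eq_abs, sq_abs, inner_smul_right] at a1 a2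
  have e1 : y + (-s) • v - x = (y - x) + (-s) • v := by module
  have e2 : x + s • v - y = -(y - x) + s • v := by module
  rw [e1, inner_add_right, inner_smul_right] at b1
  rw [e2, inner_add_right, inner_smul_right, inner_neg_right] at b2
  have e3 : ⟪G y - G x, y - x⟫ = ⟪G y, y - x⟫ - ⟪G x, y - x⟫ := inner_sub_left _ _ _
  have e4 : ⟪G y - G x, v⟫ = ⟪G y, v⟫ - ⟪G x, v⟫ := inner_sub_left _ _ _
  have f1 : s * ⟪G y - G x, v⟫ ≤ ⟪G y - G x, y - x⟫ := by
    have : L * s^2 * ‖v‖^2 = s * ⟪G y - G x, v⟫ := by rw [← hsv]; ring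
    rw [e3]
    rw [e4] at this ⊢
    nlinarith
  calc ⟪G y - G x, v⟫ ^ 2 = L * ‖v‖ ^ 2 * (s * ⟪G y - G x, v⟫) := by rw [← hsv]; ring
    _ ≤ _ := by gcongr

/-- Cocoercivity in the direction `v` along segments on which `v` is an inner direction. -/
theorem coco_segment (hS : Convex ℝ S) (hL : 0 < L)
    (hlip : ∀ x y : E, ‖G x - G y‖ ≤ L * ‖x - y‖)
    (hconv : ∀ x ∈ S, ∀ y ∈ S, U x + ⟪G x, y - x⟫ ≤ U y)
    {x y v : E} (hv : v ≠ 0) {η : ℝ} (hη : 0 < η)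
    (hx : ∀ s : ℝ, |s| ≤ η → x + s • v ∈ S) (hy : ∀ s : ℝ, |s| ≤ η → y + s • v ∈ S) :
    ⟪G y - G x, v⟫ ^ 2 ≤ L * ‖v‖ ^ 2 * ⟪G y - G x, y - x⟫ := by
  have hv0 : 0 < ‖v‖ := norm_pos_iff.2 hv
  obtain ⟨n, hn⟩ := exists_nat_gt (‖y - x‖ / (η * ‖v‖))
  have hN' : (0:ℝ) < n := lt_of_le_of_lt (by positivity) hn
  rw [div_lt_iff₀ (by positivity)] at hn
  set d := y - x with hd
  set P : ℕ → E := fun i => x + ((i : ℝ) / n) • d with hP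
  have mem : ∀ i : ℕ, i ≤ n → ∀ s : ℝ, |s| ≤ η → P i + s • v ∈ S := by
    intro i hi s hs
    have hi' : (i:ℝ) ≤ n := by exact_mod_cast hi
    have := hS.add_smul_sub_mem (hx s hs) (hy s hs) (t := (i:ℝ)/n)
      ⟨by positivity, by rw [div_le_one hN']; exact hi'⟩
    convert this using 1
    rw [hP, hd]
    module
  have step : ∀ i : ℕ, P (i+1) - P i = (1 / (n:ℝ)) • d := by
    intro i
    simp only [hP]
    push_cast
    rw [add_div]
    module
  have loc : ∀ i ∈ Finset.range n, ⟪G (P (i+1)) - G (P i), v⟫ ^ 2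
      ≤ L * ‖v‖ ^ 2 * (1 / n * ⟪G (P (i+1)) - G (P i), d⟫) := by
    intro i hi
    have hi := Finset.mem_range.1 hi
    have := coco_local hS hL hlip hconv hv (mem i (by omega)) (mem (i+1) (by omega)) (by
      rw [step, norm_smul, Real.norm_of_nonneg (by positivity), one_div, inv_mul_le_iff₀ hN']
      exact hn.le)
    rwa [step, inner_smul_right] at this
  have P0 : P 0 = x := by simp [hP]
  have Pn : P n = y := by simp [hP, hN'.ne', hd]
  have tel : ∀ w : E, ∑ i ∈ Finset.range n, ⟪G (P (i+1)) - G (P i), w⟫ = ⟪G y - G x, w⟫ := by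
    intro w
    rw [← sum_inner, Finset.sum_range_sub (fun i => G (P i)), P0, Pn]
  have cs := sq_sum_le_card_mul_sum_sq (s := Finset.range n)
    (f := fun i => ⟪G (P (i+1)) - G (P i), v⟫)
  rw [tel, Finset.card_range] at cs
  refine cs.trans ?_
  calc (n:ℝ) * ∑ i ∈ Finset.range n, ⟪G (P (i+1)) - G (P i), v⟫ ^ 2
      ≤ n * ∑ i ∈ Finset.range n, L * ‖v‖ ^ 2 * (1 / n * ⟪G (P (i+1)) - G (P i), d⟫) := by
        gcongr with i hi
        exact loc i hi
    _ = _ := by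
        rw [← Finset.mul_sum, ← Finset.mul_sum, tel]
        field_simp

/-- Cocoercivity on a convex set for gradient differences in its direction space. -/
theorem coco (hS : Convex ℝ S) (hL : 0 < L)
    (hlip : ∀ x y : E, ‖G x - G y‖ ≤ L * ‖x - y‖)
    (hconv : ∀ x ∈ S, ∀ y ∈ S, U x + ⟪G x, y - x⟫ ≤ U y)
    {x y : E} (hx : x ∈ S) (hy : y ∈ S) (hv : G y - G x ∈ vectorSpan ℝ S) :
    ‖G y - G x‖ ^ 2 ≤ L * ⟪G y - G x, y - x⟫ := by
  by_cases hv0 : G y - G x = 0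
  · simp [hv0]
  obtain ⟨o, ε, hε, ho⟩ := exists_inner_dir hS hx hv
  set v := G y - G x with hvdef
  have hG : Continuous G := by
    have : LipschitzWith (Real.toNNReal L) G := LipschitzWith.of_dist_le_mul fun a b => by
      rw [dist_eq_norm, dist_eq_norm, Real.coe_toNNReal _ hL.le]; exact hlip a b
    exact this.continuous
  have hτ : ∀ τ : ℝ, τ ∈ Set.Ioo (0:ℝ) 1 →
      ⟪G (y + τ • (o - y)) - G (x + τ • (o - x)), v⟫ ^ 2 ≤ L * ‖v‖ ^ 2 *
       ⟪G (y + τ • (o - y)) - G (x + τ • (o - x)), (y + τ • (o - y)) - (x + τ • (o - x))⟫ := by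
    intro τ hτ
    have hin : ∀ a ∈ S, ∀ s : ℝ, |s| ≤ τ * ε → a + τ • (o - a) + s • v ∈ S := by
      intro a ha s hs
      have h0 := hτ.1
      have h1 := ho (s / τ) (by rw [abs_div, abs_of_pos h0, div_le_iff₀ h0]; linarith)
      have := hS.add_smul_sub_mem ha h1 (t := τ) ⟨h0.le, hτ.2.le⟩
      convert this using 1
      have : s • v = τ • ((s / τ) • v) := by rw [smul_smul, mul_div_cancel₀ _ h0.ne']
      rw [this]
      module
    exact coco_segment hS hL hlip hconv hv0 (mul_pos hτ.1 hε) (hin x hx) (hin y hy)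
  have main : ⟪v, v⟫ ^ 2 ≤ L * ‖v‖ ^ 2 * ⟪v, y - x⟫ := by
    have c1 : Continuous fun τ : ℝ => ⟪G (y + τ • (o - y)) - G (x + τ • (o - x)), v⟫ ^ 2 := by
      fun_prop
    have c2 : Continuous fun τ : ℝ => L * ‖v‖ ^ 2 *
       ⟪G (y + τ • (o - y)) - G (x + τ • (o - x)), (y + τ • (o - y)) - (x + τ • (o - x))⟫ := by
      fun_prop
    have t1 := (c1.tendsto 0).mono_left (nhdsWithin_le_nhds (s := Set.Ioi 0))
    have t2 := (c2.tendsto 0).mono_left (nhdsWithin_le_nhds (s := Set.Ioi 0))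
    have := le_of_tendsto_of_tendsto t1 t2
      (Filter.eventually_of_mem (Ioo_mem_nhdsGT (zero_lt_one' ℝ)) hτ)
    simpa [← hvdef] using this
  rw [real_inner_self_eq_norm_sq] at main
  have hp : 0 < ‖v‖ ^ 2 := by have := norm_pos_iff.2 hv0; positivity
  nlinarith

end

set_option maxHeartbeats 2000000 in
/-- The algebraic core, after rescaling by the step size. -/
theorem core (c q : ℝ) (hc : 0 < c) (hq : 0 < q) (hcq : c = 1 - q)
    (d r s z d' : E) (F F' : ℝ)
    (hd' : d' = c • (d - (r - s)) - r)
    (h1 : F ≤ F' + ⟪r, d⟫ - q ^ 2 / 8 * ‖d‖ ^ 2)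
    (h2 : F + q ^ 2 / 8 * ‖z‖ ^ 2 ≤ ⟪r, z⟫)
    (h3 : q ^ 2 / 8 * ‖z‖ ^ 2 ≤ F)
    (h4 : 2 * ‖r - s‖ ^ 2 ≤ ⟪r - s, d⟫)
    (h5 : 2 * ‖r‖ ^ 2 ≤ ⟪r, z⟫)
    (h6 : 4 * ‖r - s‖ ^ 2 ≤ ‖d‖ ^ 2) :
    (1 + q / 60) * (1 / c * F + 1 / 4 * ‖d'‖ ^ 2 + 1 / 4 * ‖d' + (q / c) • (z + d') + r‖ ^ 2
      - (1 + c) / (4 * c) * ‖r‖ ^ 2)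
    ≤ 1 / c * F' + 1 / 4 * ‖d‖ ^ 2 + 1 / 4 * ‖d + (q / c) • z + s‖ ^ 2
      - (1 + c) / (4 * c) * ‖s‖ ^ 2 := by
  obtain ⟨D, hD⟩ : ∃ D, D = r - s := ⟨_, rfl⟩
  obtain ⟨y, hy⟩ : ∃ y, y = z - r := ⟨_, rfl⟩
  obtain ⟨u, hu⟩ : ∃ u, u = d - D := ⟨_, rfl⟩
  have es : s = r - D := by rw [hD]; module
  have ez : z = y + r := by rw [hy]; module
  have ed : d = u + D := by rw [hu]; module
  rw [← hD] at h4 h6 hd'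
  rw [← hu] at hd'
  have eu : c • u = d' + r := by rw [hd']; module
  have ew' : d' + (q / c) • (z + d') + r = (1 / c) • (d' + r + q • y) := by
    rw [ez, show q = 1 - c by linarith]
    match_scalars <;> field_simp <;> ring
  have eu2 : u = (1 / c) • (d' + r) := by rw [← eu, smul_smul, one_div, inv_mul_cancel₀ hc.ne', one_smul]
  have ew : d + (q / c) • z + s = (1 / c) • (d' + r + q • y + r) := by
    rw [ed, ez, es, eu2, show q = 1 - c by linarith]
    match_scalars <;> field_simp <;> ring
  rw [ew', ew]
  have n1 : ‖(1 / c) • (d' + r + q • y)‖ ^ 2 = 1 / c ^ 2 * ‖d' + r + q • y‖ ^ 2 := by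
    rw [norm_smul, mul_pow, Real.norm_eq_abs, sq_abs]; ring
  have n2 : ‖(1 / c) • (d' + r + q • y + r)‖ ^ 2
      = 1 / c ^ 2 * (‖d' + r + q • y‖ ^ 2 + 2 * (⟪d', r⟫ + ‖r‖ ^ 2 + q * ⟪r, y⟫) + ‖r‖ ^ 2) := by
    rw [norm_smul, mul_pow, Real.norm_eq_abs, sq_abs, norm_add_sq_real (d' + r + q • y) r,
      inner_add_left, inner_add_left, inner_smul_left, real_inner_self_eq_norm_sq,
      real_inner_comm r y]
    simp only [conj_trivial]
    ring
  have n3 : ‖s‖ ^ 2 = ‖r‖ ^ 2 - 2 * ⟪r, D⟫ + ‖D‖ ^ 2 := by rw [es, norm_sub_sq_real]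
  have n4 : ‖d‖ ^ 2 = ‖u‖ ^ 2 + 2 * ⟪D, u⟫ + ‖D‖ ^ 2 := by
    rw [ed, norm_add_sq_real, real_inner_comm]
  have n5 : ⟪r, d⟫ = 1 / c * (⟪d', r⟫ + ‖r‖ ^ 2) + ⟪r, D⟫ := by
    rw [ed, inner_add_right, eu2, inner_smul_right, inner_add_right, real_inner_self_eq_norm_sq,
      real_inner_comm]
  have n6 : ‖u‖ ^ 2 = 1 / c ^ 2 * (‖d'‖ ^ 2 + 2 * ⟪d', r⟫ + ‖r‖ ^ 2) := by
    rw [eu2, norm_smul, mul_pow, Real.norm_eq_abs, sq_abs, norm_add_sq_real]; ring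
  have n7 : ⟪D, d⟫ = ⟪D, u⟫ + ‖D‖ ^ 2 := by
    rw [ed, inner_add_right, real_inner_self_eq_norm_sq]
  have n8 : ⟪r, z⟫ = ⟪r, y⟫ + ‖r‖ ^ 2 := by
    rw [ez, inner_add_right, real_inner_self_eq_norm_sq]
  have n9 : ‖y‖ ^ 2 = ‖z‖ ^ 2 - 2 * ⟪r, z⟫ + ‖r‖ ^ 2 := by
    rw [hy, norm_sub_sq_real, real_inner_comm]
  -- bound on the third term
  have n10 : ‖d' + r + q • y‖ ^ 2 ≤ 3 * (‖d'‖ ^ 2 + ‖r‖ ^ 2 + q ^ 2 * ‖y‖ ^ 2) := by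
    have t := norm_add₃_le (a := d') (b := r) (c := q • y)
    rw [norm_smul, Real.norm_of_nonneg hq.le] at t
    have t0 := norm_nonneg (d' + r + q • y)
    have t1 := pow_le_pow_left₀ t0 t 2
    nlinarith [sq_nonneg (‖d'‖ - ‖r‖), sq_nonneg (‖d'‖ - q * ‖y‖), sq_nonneg (‖r‖ - q * ‖y‖)]
  -- cross term
  have n11 : 2 * q * c * ⟪r, D⟫ ≤ c * (q ^ 2 + c ^ 2) * ‖D‖ ^ 2 + q / 2 * ‖r‖ ^ 2 := by
    have t := real_inner_le_norm r D
    have t1 : 2 * q * c * ⟪r, D⟫ ≤ 2 * q * c * (‖r‖ * ‖D‖) := by gcongr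
    have t2 : 2 * q * c * (‖r‖ * ‖D‖) ≤ c * (q ^ 2 + c ^ 2) * ‖D‖ ^ 2 + q / 2 * ‖r‖ ^ 2 := by
      have e : c * (q ^ 2 + c ^ 2) * ‖D‖ ^ 2 + q / 2 * ‖r‖ ^ 2 - 2 * q * c * (‖r‖ * ‖D‖)
        = q / 2 * (‖r‖ - 2 * c * ‖D‖) ^ 2 + c * (q - c) ^ 2 * ‖D‖ ^ 2 := by ring
      have : 0 ≤ q / 2 * (‖r‖ - 2 * c * ‖D‖) ^ 2 + c * (q - c) ^ 2 * ‖D‖ ^ 2 := by positivity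
      linarith
    linarith
  rw [n1, n2, n3]
  have hc1 : c < 1 := by linarith
  have n12 : 4 * ‖D‖ ^ 2 ≤ 1 / c ^ 2 * (‖d'‖ ^ 2 + 2 * ⟪d', r⟫ + ‖r‖ ^ 2) + 2 * ⟪D, u⟫ + ‖D‖ ^ 2 := by
    rw [← n6, ← n4]; exact h6
  rw [n5, n4, n6] at h1
  rw [n4, n6]
  rw [n7] at h4
  rw [n8] at h2 h5 n9
  have hr0 : 0 ≤ ‖r‖ ^ 2 := by positivity
  have hA0 : 0 ≤ ‖d'‖ ^ 2 := by positivity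
  have hT0 : 0 ≤ ‖D‖ ^ 2 := by positivity
  have hz0 : 0 ≤ ‖z‖ ^ 2 := by positivity
  generalize ‖d' + r + q • y‖ ^ 2 = W at *
  generalize ‖d'‖ ^ 2 = A at *
  generalize ⟪d', r⟫ = B at *
  generalize ‖r‖ ^ 2 = R at *
  generalize ⟪r, y⟫ = Y at *
  generalize ⟪r, D⟫ = X at *
  generalize ‖D‖ ^ 2 = T at *
  generalize ⟪D, u⟫ = K at *
  generalize ‖y‖ ^ 2 = YY at *
  generalize ‖z‖ ^ 2 = Z at *
  clear n1 n2 n3 n4 n5 n6 n7 n8 ew ew' eu eu2 ed ez es hu hy hD hd'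
  obtain ⟨M, hM⟩ : ∃ M, M = 1 / c * F + 1 / 4 * A + 1 / 4 * (1 / c ^ 2 * W)
      - (1 + c) / (4 * c) * R := ⟨_, rfl⟩
  rw [← hM]
  have hq1 : q ^ 2 ≤ 1 := by nlinarith
  have hFY : F ≤ 2 * Y := by nlinarith [mul_nonneg (sq_nonneg q) hz0]
  have hYY : q ^ 2 * YY ≤ 9 * Y := by
    rw [n9]
    have t1 := mul_nonneg (sq_nonneg q) hr0
    have t2 := mul_nonneg (sq_nonneg q) (show 0 ≤ Y by linarith)
    have t3 : q ^ 2 * (Z - 2 * (Y + R) + R) = q ^ 2 * Z - 2 * (q ^ 2 * Y) - q ^ 2 * R := by ring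
    rw [t3]
    linarith
  have hF0 : 0 ≤ F := by nlinarith [mul_nonneg (sq_nonneg q) hz0]
  have hMb : c ^ 2 * M ≤ A + 19 / 2 * Y := by
    have e : c ^ 2 * M = c * F + c ^ 2 / 4 * A + W / 4 - c * (1 + c) / 4 * R := by
      rw [hM]; field_simp
    have e1 : c * F ≤ F := by nlinarith
    have e2 : c ^ 2 / 4 * A ≤ 1 / 4 * A := by
      have : c ^ 2 ≤ 1 := by nlinarith
      gcongr
    have e3 : 0 ≤ c * (1 + c) / 4 * R := by positivity
    rw [e]
    linarith
  have hdiff : 4 * c ^ 2 * (M - (1 / c * F' + 1 / 4 * (1 / c ^ 2 * (A + 2 * B + R) + 2 * K + T)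
      + 1 / 4 * (1 / c ^ 2 * (W + 2 * (B + R + q * Y) + R))
      - (1 + c) / (4 * c) * (R - 2 * X + T))) ≤ -(q * (1 + c)) * A - 3 / 2 * q * Y := by
    set N := 1 / c ^ 2 * (A + 2 * B + R) + 2 * K + T with hN
    have e : 4 * c ^ 2 * (M - (1 / c * F' + 1 / 4 * N
      + 1 / 4 * (1 / c ^ 2 * (W + 2 * (B + R + q * Y) + R))
      - (1 + c) / (4 * c) * (R - 2 * X + T)))
      = 4 * c * (F - F' - (1 / c * (B + R) + X)) - (q * (1 + c)) * A - 2 * q * Y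
        - 2 * c ^ 2 * K + c * T + 2 * q * c * X := by
      rw [hM, hN, hcq]
      have : (1 - q) ≠ 0 := by rw [← hcq]; exact hc.ne'
      field_simp
      ring
    rw [e]
    have e1 : 4 * c * (F - F' - (1 / c * (B + R) + X)) ≤ 4 * c * (- (q ^ 2 / 8 * (4 * T))) := by
      gcongr
      have : q ^ 2 / 8 * (4 * T) ≤ q ^ 2 / 8 * N := by gcongr
      linarith
    have e2 : 2 * c ^ 2 * T ≤ 2 * c ^ 2 * K := by gcongr; linarith
    have e3 : q / 2 * R ≤ q / 2 * Y := by gcongr; linarith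
    have e4 : 4 * c * (- (q ^ 2 / 8 * (4 * T))) - 2 * c ^ 2 * T + c * T
        = - (c * (q ^ 2 + c ^ 2) * T) := by rw [hcq]; ring
    linarith
  have hfin : q / 15 * (c ^ 2 * M) ≤ q / 15 * (A + 19 / 2 * Y) := by gcongr
  have e5 : q * A ≤ q * (1 + c) * A := by nlinarith [mul_nonneg (mul_nonneg hq.le hc.le) hA0]
  have e6 : 0 ≤ q * Y := mul_nonneg hq.le (by linarith)
  have e7 : 0 ≤ q * A := by positivity
  have hc2 : 0 < 4 * c ^ 2 := by positivity
  refine le_of_mul_le_mul_left ?_ hc2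
  linarith

end NagAux

set_option maxHeartbeats 2000000 in
theorem nag_sc_lyapunov_one_step
    {E : Type*} [NormedAddCommGroup E] [InnerProductSpace ℝ E] [CompleteSpace E]
    (S : Set E) (hS : Convex ℝ S)
    (U : E → ℝ) (L μ : ℝ) (hμ : 0 < μ) (hμL : μ ≤ L)
    (hsmooth : ∀ x y : E, ‖gradient U x - gradient U y‖ ≤ L * ‖x - y‖)
    (hstrong : ∀ x ∈ S, ∀ y ∈ S,
      U x + ⟪gradient U x, y - x⟫ + μ / 2 * ‖y - x‖ ^ 2 ≤ U y)
    (gstar : E) (hgstarS : gstar ∈ S) (hmin : ∀ x ∈ S, U gstar ≤ U x)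
    (hcrit : gradient U gstar = 0)
    (γ h : ℝ) (hγ : γ = 2 * Real.sqrt μ)
    (hh : h = min (1 / Real.sqrt (2 * L)) (1 / 2)) (hγh : γ * h < 1)
    (g ξ : ℕ → E)
    (hξ : ∀ k : ℕ, ξ (k + 1) = (1 - γ * h) • ξ k
      - ((1 - γ * h) * h) • (gradient U (g k) - gradient U (g (k - 1)))
      - h • gradient U (g k))
    (hg : ∀ k : ℕ, g (k + 1) = g k + h • ξ (k + 1))
    (hgS : ∀ k : ℕ, g k ∈ S) (hg0S : g 0 - h • ξ 0 ∈ S)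
    (LNAG : E → E → ℝ)
    (hLNAG : ∀ x v : E, LNAG x v =
      (1 / (1 - γ * h)) * (U (x - h • v) - U gstar) + (1 / 4 : ℝ) * ‖v‖ ^ 2
        + (1 / 4 : ℝ) * ‖v + (γ / (1 - γ * h)) • (x - gstar)
            + h • gradient U (x - h • v)‖ ^ 2
        - (h ^ 2 * (2 - γ * h) / (4 * (1 - γ * h))) * ‖gradient U (x - h • v)‖ ^ 2) :
    ∀ k : ℕ, 1 ≤ k →
      LNAG (g (k + 1)) (ξ (k + 1)) - LNAG (g k) (ξ k)
        ≤ -((Real.sqrt μ / 30) * min (1 / Real.sqrt (2 * L)) (1 / 2))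
            * LNAG (g (k + 1)) (ξ (k + 1)) := by
  intro k hk
  obtain ⟨j, rfl⟩ : ∃ j, k = j + 1 := ⟨k - 1, by omega⟩
  have hL : 0 < L := lt_of_lt_of_le hμ hμL
  have hsL : 0 < Real.sqrt (2 * L) := Real.sqrt_pos.2 (by linarith)
  have hsμ : 0 < Real.sqrt μ := Real.sqrt_pos.2 hμ
  have hh0 : 0 < h := by rw [hh]; positivity
  have hhL : L * h ^ 2 ≤ 1 / 2 := by
    have h1 : h ≤ 1 / Real.sqrt (2 * L) := by rw [hh]; exact min_le_left _ _
    have h2 : h ^ 2 ≤ (1 / Real.sqrt (2 * L)) ^ 2 := pow_le_pow_left₀ hh0.le h1 2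
    rw [div_pow, Real.sq_sqrt (by linarith), one_pow, le_div_iff₀ (by linarith)] at h2
    linarith
  rw [← hh]
  clear hh
  have hμγ : γ ^ 2 = 4 * μ := by rw [hγ, mul_pow, Real.sq_sqrt hμ.le]; norm_num
  have hb : Real.sqrt μ / 30 * h = γ * h / 60 := by rw [hγ]; ring
  rw [hb]
  have hγ0 : 0 < γ := by rw [hγ]; positivity
  obtain ⟨q, hq⟩ : ∃ q, q = γ * h := ⟨_, rfl⟩
  obtain ⟨c, hc⟩ : ∃ c, c = 1 - q := ⟨_, rfl⟩
  have hq0 : 0 < q := by rw [hq]; positivity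
  have hc0 : 0 < c := by rw [hc, hq]; linarith
  have hμq : μ * h ^ 2 = q ^ 2 / 4 := by rw [hq, mul_pow, hμγ]; ring
  rw [← hq, ← hc] at hξ
  simp only [← hq, ← hc] at hLNAG
  rw [← hq]
  have hconv : ∀ x ∈ S, ∀ y ∈ S, U x + ⟪gradient U x, y - x⟫ ≤ U y := by
    intro x hx y hy
    have := hstrong x hx y hy
    have : 0 ≤ μ / 2 * ‖y - x‖ ^ 2 := by positivity
    linarith
  -- directions
  have hdir : ∀ x ∈ S, ∀ y ∈ S, x - y ∈ vectorSpan ℝ S := fun x hx y hy =>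
    vsub_mem_vectorSpan ℝ hx hy
  have hξV : ∀ k, ξ k ∈ vectorSpan ℝ S := by
    intro k
    have : h • ξ k ∈ vectorSpan ℝ S := by
      cases k with
      | zero => simpa using hdir _ (hgS 0) _ hg0S
      | succ k => simpa [hg k] using hdir _ (hgS (k+1)) _ (hgS k)
    exact (Submodule.smul_mem_iff _ hh0.ne').1 this
  have hGV : ∀ k, gradient U (g k) ∈ vectorSpan ℝ S := by
    intro k
    induction k with
    | zero =>
      have e : h • gradient U (g 0) = c • ξ 0 - ξ 1 := by
        have := hξ 0
        simp only [Nat.zero_sub, sub_self, smul_zero, sub_zero, zero_add] at this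
        rw [this]; module
      refine (Submodule.smul_mem_iff _ hh0.ne').1 ?_
      rw [e]
      exact Submodule.sub_mem _ (Submodule.smul_mem _ _ (hξV 0)) (hξV 1)
    | succ k ih =>
      have e : (h * (1 + c)) • gradient U (g (k+1))
          = c • ξ (k+1) + (c * h) • gradient U (g k) - ξ (k+2) := by
        have := hξ (k+1)
        simp only [Nat.add_sub_cancel] at this
        rw [this]; module
      refine (Submodule.smul_mem_iff _ (show h * (1 + c) ≠ 0 by positivity)).1 ?_
      rw [e]
      exact Submodule.sub_mem _ (Submodule.add_mem _ (Submodule.smul_mem _ _ (hξV _))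
        (Submodule.smul_mem _ _ ih)) (hξV _)
  have hx : g (j+1) ∈ S := hgS _
  have hx' : g j ∈ S := hgS _
  have coco1 := NagAux.coco hS hL hsmooth hconv hx' hx
    (Submodule.sub_mem _ (hGV (j+1)) (hGV j))
  have coco2 := NagAux.coco hS hL hsmooth hconv hgstarS hx
    (by rw [hcrit, sub_zero]; exact hGV (j+1))
  have st1 := hstrong _ hx _ hx'
  have st2 := hstrong _ hx _ hgstarS
  have st3 := hstrong _ hgstarS _ hx
  have lip := hsmooth (g (j+1)) (g j)
  have rec1 := hξ (j+1)
  simp only [Nat.add_sub_cancel] at rec1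
  have L1 := hLNAG (g (j+1)) (ξ (j+1))
  have L2 := hLNAG (g (j+1+1)) (ξ (j+1+1))
  have b1 : g (j+1) - h • ξ (j+1) = g j := by rw [hg j]; module
  have b2 : g (j+1+1) - h • ξ (j+1+1) = g (j+1) := by rw [hg (j+1)]; module
  have b3 : g (j+1) - g j = h • ξ (j+1) := by rw [hg j]; module
  have b4 : g (j+1+1) - gstar = (g (j+1) - gstar) + h • ξ (j+1+1) := by rw [hg (j+1)]; module
  rw [b1] at L1
  rw [b2, b4] at L2
  rw [hcrit, sub_zero] at coco2
  rw [hcrit, inner_zero_left, add_zero] at st3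
  rw [← neg_sub (g (j+1)) gstar, inner_neg_right, norm_neg] at st2
  rw [← neg_sub (g (j+1)) (g j), inner_neg_right, norm_neg] at st1
  rw [b3] at coco1 st1 lip
  generalize ξ (j+1+1) = v' at *
  generalize ξ (j+1) = v at *
  generalize gradient U (g (j+1)) = G at *
  generalize gradient U (g j) = G' at *
  generalize g (j+1) - gstar = z at *
  have hsq : ∀ w : E, ‖h • w‖ ^ 2 = h ^ 2 * ‖w‖ ^ 2 := fun w => by
    rw [norm_smul, mul_pow, Real.norm_eq_abs, sq_abs]
  have hsq2 : ∀ w : E, ‖(h ^ 2) • w‖ ^ 2 = h ^ 4 * ‖w‖ ^ 2 := fun w => by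
    rw [norm_smul, mul_pow, Real.norm_eq_abs, sq_abs]; ring
  have hh2 : 0 < h ^ 2 := by positivity
  have C := NagAux.core c q hc0 hq0 hc (h • v) (h ^ 2 • G) (h ^ 2 • G') z (h • v')
    (h ^ 2 * (U (g (j+1)) - U gstar)) (h ^ 2 * (U (g j) - U gstar))
    (by rw [rec1]; module)
    (by
      rw [inner_smul_left, conj_trivial]
      have := mul_le_mul_of_nonneg_left st1 hh2.le
      have e : h ^ 2 * (μ / 2 * ‖h • v‖ ^ 2) = q ^ 2 / 8 * ‖h • v‖ ^ 2 := by
        rw [show h ^ 2 * (μ / 2 * ‖h • v‖ ^ 2) = μ * h ^ 2 * ‖h • v‖ ^ 2 / 2 by ring, hμq]; ring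
      rw [mul_add, mul_add, e] at this
      linarith)
    (by
      rw [inner_smul_left, conj_trivial]
      have := mul_le_mul_of_nonneg_left st2 hh2.le
      have e : h ^ 2 * (μ / 2 * ‖z‖ ^ 2) = q ^ 2 / 8 * ‖z‖ ^ 2 := by
        rw [show h ^ 2 * (μ / 2 * ‖z‖ ^ 2) = μ * h ^ 2 * ‖z‖ ^ 2 / 2 by ring, hμq]; ring
      rw [mul_add, mul_add, e] at this
      linarith)
    (by
      have := mul_le_mul_of_nonneg_left st3 hh2.le
      have e : h ^ 2 * (μ / 2 * ‖z‖ ^ 2) = q ^ 2 / 8 * ‖z‖ ^ 2 := by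
        rw [show h ^ 2 * (μ / 2 * ‖z‖ ^ 2) = μ * h ^ 2 * ‖z‖ ^ 2 / 2 by ring, hμq]; ring
      rw [mul_add, e] at this
      linarith)
    (by
      rw [← smul_sub, hsq2, inner_smul_left, conj_trivial]
      have p0 : 0 ≤ ⟪G - G', h • v⟫ := by
        by_contra hneg
        push Not at hneg
        nlinarith [sq_nonneg ‖G - G'‖]
      have := mul_le_mul_of_nonneg_left coco1 hh2.le
      nlinarith [mul_le_mul_of_nonneg_left this hh2.le, mul_le_mul_of_nonneg_right hhL p0,
        mul_le_mul_of_nonneg_right hhL (mul_nonneg hh2.le p0)])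
    (by
      rw [hsq2, inner_smul_left, conj_trivial]
      have p0 : 0 ≤ ⟪G, z⟫ := by
        by_contra hneg
        push Not at hneg
        nlinarith [sq_nonneg ‖G‖]
      have := mul_le_mul_of_nonneg_left coco2 hh2.le
      nlinarith [mul_le_mul_of_nonneg_left this hh2.le,
        mul_le_mul_of_nonneg_right hhL (mul_nonneg hh2.le p0)])
    (by
      rw [← smul_sub]
      have e : 2 * ‖h ^ 2 • (G - G')‖ ≤ ‖h • v‖ := by
        rw [norm_smul, Real.norm_of_nonneg hh2.le]
        have := mul_le_mul_of_nonneg_left lip hh2.le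
        nlinarith [mul_le_mul_of_nonneg_right hhL (norm_nonneg (h • v))]
      have := pow_le_pow_left₀ (by positivity) e 2
      linarith [mul_pow 2 ‖h ^ 2 • (G - G')‖ 2])
  have E1 : h ^ 2 * LNAG (g (j+1)) v = 1 / c * (h ^ 2 * (U (g j) - U gstar)) + 1 / 4 * ‖h • v‖ ^ 2
      + 1 / 4 * ‖h • v + (q / c) • z + h ^ 2 • G'‖ ^ 2 - (1 + c) / (4 * c) * ‖h ^ 2 • G'‖ ^ 2 := by
    have e : h • v + (q / c) • z + h ^ 2 • G' = h • (v + (γ / c) • z + h • G') := by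
      rw [hq]; match_scalars <;> ring
    rw [e, hsq, hsq, hsq2, L1, show 2 - q = 1 + c by linarith]
    ring
  have E2 : h ^ 2 * LNAG (g (j+1+1)) v' = 1 / c * (h ^ 2 * (U (g (j+1)) - U gstar))
      + 1 / 4 * ‖h • v'‖ ^ 2
      + 1 / 4 * ‖h • v' + (q / c) • (z + h • v') + h ^ 2 • G‖ ^ 2
      - (1 + c) / (4 * c) * ‖h ^ 2 • G‖ ^ 2 := by
    have e : h • v' + (q / c) • (z + h • v') + h ^ 2 • G
        = h • (v' + (γ / c) • (z + h • v') + h • G) := by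
      rw [hq]; match_scalars <;> ring
    rw [e, hsq, hsq, hsq2, L2, show 2 - q = 1 + c by linarith]
    ring
  rw [← E1, ← E2] at C
  refine le_of_mul_le_mul_left ?_ hh2
  linarith
end
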